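/- arXiv:2510.09279 — 3 statements merged into one kernel-verified Lean document; each statement's English description precedes it below -/
import Mathlib

section
/- Let H be a separable infinite-dimensional complex Hilbert space and let T ∈ B(H) be a (p,k)-quasihyponormal operator for some 0 < p ≤ 1 and positive integer k. Then T has the single valued extension property. -/
open ContinuousLinearMap Filter

set_option synthInstance.maxHeartbeats 400000

/-- The `p`-th power of an operator (intended for positive operators), via the
continuous functional calculus. -/
noncomputable def opRpow {H : Type*} [NormedAddCommGroup H] [InnerProductSpace ℂ H]
    [CompleteSpace H] (A : H →L[ℂ] H) (p : ℝ) : H →L[ℂ] H :=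
  cfc (fun x : ℝ => x ^ p) A

/-- The logarithm of an operator (intended for positive invertible operators), via the
continuous functional calculus. -/
noncomputable def opLog {H : Type*} [NormedAddCommGroup H] [InnerProductSpace ℂ H]
    [CompleteSpace H] (A : H →L[ℂ] H) : H →L[ℂ] H :=
  cfc Real.log A

/-- `|A| = (A*A)^{1/2}`, via the continuous functional calculus. -/
noncomputable def opAbs {H : Type*} [NormedAddCommGroup H] [InnerProductSpace ℂ H]
    [CompleteSpace H] (A : H →L[ℂ] H) : H →L[ℂ] H :=
  cfc (fun x : ℝ => Real.sqrt x) (adjoint A * A)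

/-- `A` is hyponormal: `A*A ≥ AA*`. -/
def Hyponormal {H : Type*} [NormedAddCommGroup H] [InnerProductSpace ℂ H]
    [CompleteSpace H] (A : H →L[ℂ] H) : Prop :=
  A * adjoint A ≤ adjoint A * A

/-- `A` is `p`-hyponormal: `(A*A)^p ≥ (AA*)^p`. -/
def PHyponormal {H : Type*} [NormedAddCommGroup H] [InnerProductSpace ℂ H]
    [CompleteSpace H] (A : H →L[ℂ] H) (p : ℝ) : Prop :=
  opRpow (A * adjoint A) p ≤ opRpow (adjoint A * A) p

/-- `A` is `(p,k)`-quasihyponormal: `A*^k ((A*A)^p − (AA*)^p) A^k ≥ 0`. -/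
def PKQuasihyponormal {H : Type*} [NormedAddCommGroup H] [InnerProductSpace ℂ H]
    [CompleteSpace H] (A : H →L[ℂ] H) (p : ℝ) (k : ℕ) : Prop :=
  0 ≤ (adjoint A) ^ k * (opRpow (adjoint A * A) p - opRpow (A * adjoint A) p) * A ^ k

/-- `A` is log-hyponormal: `A` invertible and `log(A*A) ≥ log(AA*)`. -/
def LogHyponormal {H : Type*} [NormedAddCommGroup H] [InnerProductSpace ℂ H]
    [CompleteSpace H] (A : H →L[ℂ] H) : Prop :=
  IsUnit A ∧ opLog (A * adjoint A) ≤ opLog (adjoint A * A)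

/-- `A` is a class A operator: `|A²| ≥ |A|²`. -/
def ClassA {H : Type*} [NormedAddCommGroup H] [InnerProductSpace ℂ H]
    [CompleteSpace H] (A : H →L[ℂ] H) : Prop :=
  opAbs A ^ 2 ≤ opAbs (A ^ 2)

/-- `A` is paranormal: `‖Ax‖² ≤ ‖A²x‖ ‖x‖` for all `x`. -/
def Paranormal {H : Type*} [NormedAddCommGroup H] [InnerProductSpace ℂ H]
    (A : H →L[ℂ] H) : Prop :=
  ∀ x : H, ‖A x‖ ^ 2 ≤ ‖A (A x)‖ * ‖x‖

/-- `A` is normaloid: its norm equals its spectral radius. -/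
def Normaloid {H : Type*} [NormedAddCommGroup H] [InnerProductSpace ℂ H]
    (A : H →L[ℂ] H) : Prop :=
  spectralRadius ℂ A = ‖A‖₊

/-- `T` has Bishop's property (β): whenever `(T - z) fₙ(z) → 0` uniformly on compact subsets
of an open set `D ⊆ ℂ`, for analytic `H`-valued functions `fₙ` on `D`, also `fₙ → 0`
uniformly on compact subsets of `D`. -/
def HasBishopBeta {H : Type*} [NormedAddCommGroup H] [InnerProductSpace ℂ H]
    (T : H →L[ℂ] H) : Prop :=
  ∀ D : Set ℂ, IsOpen D → ∀ f : ℕ → ℂ → H,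
    (∀ n, AnalyticOnNhd ℂ (f n) D) →
    (∀ K : Set ℂ, K ⊆ D → IsCompact K →
      TendstoUniformlyOn (fun n z => T (f n z) - z • f n z) 0 atTop K) →
    ∀ K : Set ℂ, K ⊆ D → IsCompact K →
      TendstoUniformlyOn (fun n z => f n z) 0 atTop K

/-- `T` has the single valued extension property: there is no nonzero analytic `H`-valued
function `f` on a nonempty open `D ⊆ ℂ` with `(T - z) f(z) ≡ 0` on `D`. -/
def HasSVEP {H : Type*} [NormedAddCommGroup H] [InnerProductSpace ℂ H]
    (T : H →L[ℂ] H) : Prop :=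
  ∀ D : Set ℂ, IsOpen D → D.Nonempty → ∀ f : ℂ → H,
    AnalyticOnNhd ℂ f D → (∀ z ∈ D, T (f z) - z • f z = 0) →
    ∀ z ∈ D, f z = 0

/-- The restriction of `A` to an invariant subspace `M`, as an operator on `M`. -/
noncomputable def restrictOp {H : Type*} [NormedAddCommGroup H] [InnerProductSpace ℂ H]
    (A : H →L[ℂ] H) (M : Submodule ℂ H) (h : ∀ x ∈ M, A x ∈ M) : M →L[ℂ] M :=
  (A.comp M.subtypeL).codRestrict M (fun x => h x x.2)

/-!
Suppose `T x = z x` with `z ≠ 0`, and put `A = T*T`, `a = |z|²`, `y = (A - a) x`. Then `⟪x, y⟫ = 0`.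
As `x` lies in the range of `T ^ k`, quasihyponormality gives `⟪(TT*)^p x, x⟫ ≤ ⟪A^p x, x⟫`, and
with the intertwining relation `T A^p = (TT*)^p T` this becomes `⟪A^p x, y⟫ ≤ 0`. The divided
difference `q(s) = (s^p - a^p) / (s - a)` extends continuously to a positive function on the
spectrum of `A`, and `⟪q(A) y, y⟫ = ⟪(A^p - a^p) x, y⟫ ≤ 0` forces `y = 0`, that is,
`T* x = conj z • x`.

Hence eigenspaces of `T` for distinct eigenvalues are orthogonal. If `T (f w) = w • f w` for all
`w` in an open set, then `⟪f z, f w⟫ = 0` whenever `w ≠ z`, and `w → z` gives `f z = 0`.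
-/

open scoped ComplexConjugate InnerProductSpace

section Intertwining

variable {𝕜 A : Type*} [RCLike 𝕜] [TopologicalSpace A] [Ring A] [StarRing A] [Algebra 𝕜 A]
  {P : A → Prop} [ContinuousFunctionalCalculus 𝕜 A P]

/-- The continuous functional calculus of `a` on functions defined on a set `K` that contains the
spectrum of `a`. Two elements with different spectra get calculi with a common domain this way. -/
noncomputable def cfcHomOn {a : A} (ha : P a) {K : Set 𝕜} (hK : spectrum 𝕜 a ⊆ K) :
    C(K, 𝕜) →⋆ₐ[𝕜] A :=
  (cfcHom ha).comp
    (ContinuousMap.compStarAlgHom' 𝕜 𝕜 ⟨Set.inclusion hK, continuous_inclusion hK⟩)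

theorem cfcHomOn_id {a : A} (ha : P a) {K : Set 𝕜} (hK : spectrum 𝕜 a ⊆ K) :
    cfcHomOn ha hK ((ContinuousMap.id 𝕜).restrict K) = a :=
  cfcHom_id ha

theorem continuous_cfcHomOn {a : A} (ha : P a) {K : Set 𝕜} (hK : spectrum 𝕜 a ⊆ K) :
    Continuous (cfcHomOn ha hK) :=
  (cfcHom_continuous ha).comp (ContinuousMap.continuous_precomp _)

theorem cfcHomOn_eq_cfc {a : A} (ha : P a) {K : Set 𝕜} (hK : spectrum 𝕜 a ⊆ K) {f : 𝕜 → 𝕜}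
    (hf : ContinuousOn f K) : cfcHomOn ha hK ⟨K.domRestrict f, hf.domRestrict⟩ = cfc f a :=
  (cfc_apply f a ha (hf.mono hK)).symm

variable [IsSemitopologicalRing A] [T2Space A]

theorem semiconjBy_cfcHomOn {x a b : A} (ha : P a) (hb : P b) (h : SemiconjBy x a b)
    (hstar : SemiconjBy x (star a) (star b)) {K : Set 𝕜} [CompactSpace K]
    (hKa : spectrum 𝕜 a ⊆ K) (hKb : spectrum 𝕜 b ⊆ K) (g : C(K, 𝕜)) :
    SemiconjBy x (cfcHomOn ha hKa g) (cfcHomOn hb hKb g) := by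
  induction g using ContinuousMap.induction_on_of_compact with
  | const r =>
    have hconst {c : A} (hc : P c) (hKc : spectrum 𝕜 c ⊆ K) :
        cfcHomOn hc hKc (.const K r) = algebraMap 𝕜 A r :=
      AlgHomClass.commutes (cfcHomOn hc hKc) r
    rw [hconst ha, hconst hb]
    exact Algebra.commute_algebraMap_right r x
  | id => rwa [cfcHomOn_id, cfcHomOn_id]
  | star_id => rwa [map_star, map_star, cfcHomOn_id, cfcHomOn_id]
  | add g₁ g₂ h₁ h₂ => simpa only [map_add] using h₁.add_right h₂
  | mul g₁ g₂ h₁ h₂ => simpa only [map_mul] using h₁.mul_right h₂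
  | frequently g hg =>
    have hclosed : IsClosed {g | SemiconjBy x (cfcHomOn ha hKa g) (cfcHomOn hb hKb g)} :=
      isClosed_eq ((continuous_cfcHomOn ha hKa).const_mul x)
        ((continuous_cfcHomOn hb hKb).mul_const x)
    exact hclosed.mem_of_frequently_of_tendsto hg tendsto_id

theorem semiconjBy_cfc {x a b : A} (ha : P a) (hb : P b) (h : SemiconjBy x a b)
    (hstar : SemiconjBy x (star a) (star b)) {f : 𝕜 → 𝕜}
    (hf : ContinuousOn f (spectrum 𝕜 a ∪ spectrum 𝕜 b)) :
    SemiconjBy x (cfc f a) (cfc f b) := by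
  have : CompactSpace ↑(spectrum 𝕜 a ∪ spectrum 𝕜 b) :=
    isCompact_iff_compactSpace.1 <|
      (ContinuousFunctionalCalculus.isCompact_spectrum a).union
        (ContinuousFunctionalCalculus.isCompact_spectrum b)
  rw [← cfcHomOn_eq_cfc ha Set.subset_union_left hf,
    ← cfcHomOn_eq_cfc hb Set.subset_union_right hf]
  exact semiconjBy_cfcHomOn ha hb h hstar _ _ _

end Intertwining

theorem cfc_sub_algebraMap_eq_cfc_dslope_mul {A : Type*} [TopologicalSpace A] [Ring A]
    [StarRing A] [Algebra ℝ A] [ContinuousFunctionalCalculus ℝ A IsSelfAdjoint] {x : A}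
    (hx : IsSelfAdjoint x) {f : ℝ → ℝ} {a : ℝ}
    (hf : ContinuousOn (dslope f a) (spectrum ℝ x)) :
    cfc f x - algebraMap ℝ A (f a) = cfc (dslope f a) x * (x - algebraMap ℝ A a) := by
  have hid : cfc (fun s : ℝ => s - a) x = x - algebraMap ℝ A a := by
    rw [cfc_sub (fun s : ℝ => s) (fun _ => a) x, cfc_id' ℝ x, cfc_const a x]
  rw [← hid, ← cfc_mul _ _ x, ← cfc_const (f a) x, ← cfc_sub f _ x hf.of_dslope]
  exact cfc_congr fun s _ => by simp [mul_comm, ← sub_smul_dslope f a s]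

theorem dslope_rpow_pos {p a s : ℝ} (hp : 0 < p) (ha : 0 < a) (hs : 0 ≤ s) :
    0 < dslope (fun t : ℝ => t ^ p) a s := by
  rcases eq_or_ne s a with rfl | hsa
  · rw [dslope_same, Real.deriv_rpow_const]
    positivity
  · rw [dslope_of_ne _ hsa]
    exact (Real.strictMonoOn_rpow_Ici_of_exponent_pos hp).slope_pos ha.le hs hsa.symm

theorem hasSVEP_of_pairwise_isOrtho_eigenspace {H : Type*} [NormedAddCommGroup H]
    [InnerProductSpace ℂ H] {T : H →L[ℂ] H}
    (hT : Pairwise fun z w : ℂ => Module.End.eigenspace (T : Module.End ℂ H) z ⟂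
      Module.End.eigenspace (T : Module.End ℂ H) w) :
    HasSVEP T := by
  intro D hD _ f hf hTf z hz
  have hmem (w : ℂ) (hw : w ∈ D) : f w ∈ Module.End.eigenspace (T : Module.End ℂ H) w :=
    Module.End.mem_eigenspace_iff.2 (sub_eq_zero.1 (hTf w hw))
  have hzero : (fun w => ⟪f z, f w⟫_ℂ) =ᶠ[nhdsWithin z {z}ᶜ] fun _ => 0 := by
    filter_upwards [self_mem_nhdsWithin, mem_nhdsWithin_of_mem_nhds (hD.mem_nhds hz)]
      with w hwz hw
    exact (hT (Ne.symm hwz)).inner_eq (hmem z hz) (hmem w hw)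
  have hlim : Tendsto (fun w => ⟪f z, f w⟫_ℂ) (nhdsWithin z {z}ᶜ) (nhds ⟪f z, f z⟫_ℂ) :=
    (continuousAt_const.inner (hf z hz).continuousAt).tendsto.mono_left nhdsWithin_le_nhds
  exact inner_self_eq_zero.1 (tendsto_nhds_unique hlim (tendsto_const_nhds.congr' hzero.symm))

section HilbertSpace

variable {H : Type*} [NormedAddCommGroup H] [InnerProductSpace ℂ H] [CompleteSpace H]

theorem re_inner_cfc_apply_self_pos {A : H →L[ℂ] H} (hA : IsSelfAdjoint A) {q : ℝ → ℝ}
    (hq : ContinuousOn q (spectrum ℝ A)) (hpos : ∀ s ∈ spectrum ℝ A, 0 < q s) {y : H}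
    (hy : y ≠ 0) : 0 < (⟪cfc q A y, y⟫_ℂ).re := by
  obtain ⟨c, hc, hcq⟩ := (ContinuousFunctionalCalculus.isCompact_spectrum A).exists_forall_le'
    hq hpos
  have hle : algebraMap ℝ (H →L[ℂ] H) c ≤ cfc q A := algebraMap_le_cfc q c A hcq
  have hre := ((le_def _ _).1 hle).re_inner_nonneg_left y
  have hcy : (⟪algebraMap ℝ (H →L[ℂ] H) c y, y⟫_ℂ).re = c * ‖y‖ ^ 2 := by
    simp [Algebra.algebraMap_eq_smul_one, ← Complex.coe_smul,
      inner_self_eq_norm_sq_to_K, ← Complex.ofReal_pow, mul_comm]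
  rw [sub_apply, inner_sub_left, map_sub, RCLike.re_to_complex, RCLike.re_to_complex, hcy] at hre
  have hcy_pos : 0 < c * ‖y‖ ^ 2 := by positivity
  linarith

theorem apply_eq_smul_of_re_inner_cfc_nonpos {A : H →L[ℂ] H} (hA : IsSelfAdjoint A)
    {f : ℝ → ℝ} {a : ℝ} (hf : ContinuousOn (dslope f a) (spectrum ℝ A))
    (hpos : ∀ s ∈ spectrum ℝ A, 0 < dslope f a s) {x : H}
    (horth : ⟪x, A x - (a : ℂ) • x⟫_ℂ = 0)
    (hre : (⟪cfc f A x, A x - (a : ℂ) • x⟫_ℂ).re ≤ 0) :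
    A x = (a : ℂ) • x := by
  set y := A x - (a : ℂ) • x with hy
  have hfactor : cfc f A x - (f a : ℂ) • x = cfc (dslope f a) A y := by
    simpa [Algebra.algebraMap_eq_smul_one, ← Complex.coe_smul, hy] using
      DFunLike.congr_fun (cfc_sub_algebraMap_eq_cfc_dslope_mul hA hf) x
  by_contra hne
  have hlt := re_inner_cfc_apply_self_pos hA hf hpos (sub_ne_zero.2 hne)
  rw [← hy, ← hfactor, inner_sub_left, inner_smul_left, horth, mul_zero, sub_zero] at hlt
  exact hlt.not_ge hre

theorem inner_cfc_adjoint_mul_self_apply (T : H →L[ℂ] H) {f : ℝ → ℝ}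
    (hf : ContinuousOn f (spectrum ℝ (adjoint T * T) ∪ spectrum ℝ (T * adjoint T))) (x y : H) :
    ⟪cfc f (adjoint T * T) x, (adjoint T * T) y⟫_ℂ = ⟪cfc f (T * adjoint T) (T x), T y⟫_ℂ := by
  have hsemi : T * cfc f (adjoint T * T) = cfc f (T * adjoint T) * T := by
    have ha : IsSelfAdjoint (adjoint T * T) := .star_mul_self T
    have hb : IsSelfAdjoint (T * adjoint T) := .mul_star_self T
    have h : SemiconjBy T (adjoint T * T) (T * adjoint T) := (mul_assoc T (adjoint T) T).symm
    exact semiconjBy_cfc ha hb h (by rwa [ha.star_eq, hb.star_eq]) hf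
  calc ⟪cfc f (adjoint T * T) x, (adjoint T * T) y⟫_ℂ
      = ⟪(T * cfc f (adjoint T * T)) x, T y⟫_ℂ := adjoint_inner_right T _ _
    _ = ⟪cfc f (T * adjoint T) (T x), T y⟫_ℂ := by rw [hsemi]; rfl

theorem apply_eq_smul_of_re_inner_opRpow_nonpos {A : H →L[ℂ] H} (hA : 0 ≤ A) {p a : ℝ}
    (hp : 0 < p) (ha : 0 < a) {x : H} (horth : ⟪x, A x - (a : ℂ) • x⟫_ℂ = 0)
    (hre : (⟪opRpow A p x, A x - (a : ℂ) • x⟫_ℂ).re ≤ 0) : A x = (a : ℂ) • x := by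
  have hcont : Continuous (dslope (fun s : ℝ => s ^ p) a) := by
    rw [← continuousOn_univ, continuousOn_dslope univ_mem]
    exact ⟨(Real.continuous_rpow_const hp.le).continuousOn,
      Real.differentiableAt_rpow_const_of_ne p ha.ne'⟩
  exact apply_eq_smul_of_re_inner_cfc_nonpos (.of_nonneg hA) hcont.continuousOn
    (fun s hs => dslope_rpow_pos hp ha (spectrum_nonneg_of_nonneg hA hs)) horth hre

theorem adjoint_apply_eq_of_re_inner_opRpow_le {T : H →L[ℂ] H} {p : ℝ} (hp : 0 < p) {z : ℂ}
    (hz : z ≠ 0) {x : H} (hx : T x = z • x)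
    (hle : (⟪opRpow (T * adjoint T) p x, x⟫_ℂ).re ≤ (⟪opRpow (adjoint T * T) p x, x⟫_ℂ).re) :
    adjoint T x = conj z • x := by
  have hnorm : 0 < ‖z‖ ^ 2 := by positivity
  have horth : ⟪x, (adjoint T * T) x - ((‖z‖ ^ 2 : ℝ) : ℂ) • x⟫_ℂ = 0 := by
    rw [inner_sub_right, mul_apply_eq_comp, adjoint_inner_right, hx, inner_smul_left,
      inner_smul_right, inner_smul_right, ← mul_assoc, Complex.conj_mul', Complex.ofReal_pow,
      sub_self]
  have hinner : ⟪opRpow (adjoint T * T) p x, (adjoint T * T) x⟫_ℂ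
      = ((‖z‖ ^ 2 : ℝ) : ℂ) * ⟪opRpow (T * adjoint T) p x, x⟫_ℂ := by
    rw [opRpow, inner_cfc_adjoint_mul_self_apply T (Real.continuous_rpow_const hp.le).continuousOn,
      hx, map_smul, inner_smul_left, inner_smul_right, ← mul_assoc, Complex.conj_mul',
      Complex.ofReal_pow, opRpow]
  have hre : (⟪opRpow (adjoint T * T) p x,
      (adjoint T * T) x - ((‖z‖ ^ 2 : ℝ) : ℂ) • x⟫_ℂ).re ≤ 0 := by
    rw [inner_sub_right, hinner, inner_smul_right, ← mul_sub, Complex.re_ofReal_mul,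
      Complex.sub_re]
    exact mul_nonpos_of_nonneg_of_nonpos hnorm.le (sub_nonpos.2 hle)
  have heig : (adjoint T * T) x = ((‖z‖ ^ 2 : ℝ) : ℂ) • x :=
    apply_eq_smul_of_re_inner_opRpow_nonpos (star_mul_self_nonneg T) hp hnorm horth hre
  refine smul_right_injective H hz ?_
  calc z • adjoint T x = (adjoint T * T) x := by rw [mul_apply_eq_comp, hx, map_smul]
    _ = z • conj z • x := by rw [heig, smul_smul, Complex.mul_conj', Complex.ofReal_pow]

theorem PKQuasihyponormal.re_inner_opRpow_le {T : H →L[ℂ] H} {p : ℝ} {k : ℕ}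
    (hT : PKQuasihyponormal T p k) (v : H) :
    (⟪opRpow (T * adjoint T) p ((T ^ k) v), (T ^ k) v⟫_ℂ).re
      ≤ (⟪opRpow (adjoint T * T) p ((T ^ k) v), (T ^ k) v⟫_ℂ).re := by
  have hre := ((nonneg_iff_isPositive _).1 hT).re_inner_nonneg_left v
  have hadj : adjoint T ^ k = adjoint (T ^ k) := (star_pow T k).symm
  rw [hadj, mul_apply_eq_comp, mul_apply_eq_comp, adjoint_inner_left, sub_apply,
    inner_sub_left, map_sub] at hre
  exact sub_nonneg.1 hre

theorem PKQuasihyponormal.adjoint_apply_eq {T : H →L[ℂ] H} {p : ℝ} {k : ℕ}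
    (hT : PKQuasihyponormal T p k) (hp : 0 < p) {z : ℂ} (hz : z ≠ 0) {x : H}
    (hx : T x = z • x) : adjoint T x = conj z • x := by
  have hpow : (T ^ k) x = z ^ k • x := by
    simpa only [map_pow, Polynomial.aeval_X, Polynomial.eval_pow, Polynomial.eval_X,
      ← toLinearMap_pow, coe_coe] using Module.End.aeval_apply_of_mem_apply_eq_smul
        (f := (T : Module.End ℂ H)) (p := Polynomial.X ^ k) hx
  have hrange : (T ^ k) ((z ^ k)⁻¹ • x) = x := by
    rw [map_smul, hpow, inv_smul_smul₀ (pow_ne_zero k hz)]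
  have hle := hT.re_inner_opRpow_le ((z ^ k)⁻¹ • x)
  rw [hrange] at hle
  exact adjoint_apply_eq_of_re_inner_opRpow_le hp hz hx hle

theorem isOrtho_eigenspace_of_adjoint_apply_eq {T : H →L[ℂ] H} {z w : ℂ} (hzw : z ≠ w)
    (hz : ∀ x, T x = z • x → adjoint T x = conj z • x) :
    Module.End.eigenspace (T : Module.End ℂ H) z ⟂
      Module.End.eigenspace (T : Module.End ℂ H) w := by
  refine Submodule.isOrtho_iff_inner_eq.2 fun x hx y hy => ?_
  have hTx : T x = z • x := Module.End.mem_eigenspace_iff.1 hx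
  have hTy : T y = w • y := Module.End.mem_eigenspace_iff.1 hy
  have hinner : z * ⟪x, y⟫_ℂ = w * ⟪x, y⟫_ℂ := by
    calc z * ⟪x, y⟫_ℂ = ⟪adjoint T x, y⟫_ℂ := by
          rw [hz x hTx, inner_smul_left, Complex.conj_conj]
      _ = w * ⟪x, y⟫_ℂ := by rw [adjoint_inner_left, hTy, inner_smul_right]
  exact (mul_eq_mul_right_iff.1 hinner).resolve_left hzw

theorem PKQuasihyponormal.pairwise_isOrtho_eigenspace {T : H →L[ℂ] H} {p : ℝ} {k : ℕ}
    (hT : PKQuasihyponormal T p k) (hp : 0 < p) :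
    Pairwise fun z w : ℂ => Module.End.eigenspace (T : Module.End ℂ H) z ⟂
      Module.End.eigenspace (T : Module.End ℂ H) w := by
  intro z w hzw
  rcases eq_or_ne z 0 with rfl | hz
  · exact (isOrtho_eigenspace_of_adjoint_apply_eq hzw.symm
      fun x => hT.adjoint_apply_eq hp hzw.symm).symm
  · exact isOrtho_eigenspace_of_adjoint_apply_eq hzw fun x => hT.adjoint_apply_eq hp hz

theorem pkQuasihyponormal_hasSVEP_general (T : H →L[ℂ] H) (p : ℝ) (hp : 0 < p) (k : ℕ)
    (hT : PKQuasihyponormal T p k) : HasSVEP T :=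
  hasSVEP_of_pairwise_isOrtho_eigenspace (hT.pairwise_isOrtho_eigenspace hp)

end HilbertSpace

theorem pkQuasihyponormal_hasSVEP {H : Type*} [NormedAddCommGroup H]
    [InnerProductSpace ℂ H] [CompleteSpace H] [TopologicalSpace.SeparableSpace H]
    (hinf : ¬ FiniteDimensional ℂ H)
    (T : H →L[ℂ] H) (p : ℝ) (hp0 : 0 < p) (hp1 : p ≤ 1) (k : ℕ) (hk : 0 < k)
    (hT : PKQuasihyponormal T p k) : HasSVEP T :=
  pkQuasihyponormal_hasSVEP_general T p hp0 k hT
end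

section
/- Every class A operator A ∈ B(H) on a complex Hilbert space H is normaloid, i.e., its operator norm equals its spectral radius. -/
open ContinuousLinearMap Filter

set_option synthInstance.maxHeartbeats 400000

/-!
For a paranormal operator `A` the sequence `n ↦ ‖Aⁿ x‖` is log-convex, so for unit `x` it dominates
the geometric sequence with ratio `‖A x‖`. Taking suprema gives `‖Aⁿ‖ = ‖A‖ⁿ`, and Gelfand's
formula identifies the spectral radius with `‖A‖`. A class A operator is paranormal because
`‖|T| x‖ = ‖T x‖` and Cauchy–Schwarz give
`‖A x‖² = ⟪|A|² x, x⟫ ≤ ⟪|A²| x, x⟫ ≤ ‖A² x‖ ‖x‖`.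
-/

section LogConvexSequence

variable {R : Type*} [CommRing R] [LinearOrder R] [IsStrictOrderedRing R] {u : ℕ → R}

theorem mul_le_mul_succ_of_sq_le_mul (hu_nonneg : ∀ n, 0 ≤ u n)
    (hu : ∀ n, u (n + 1) ^ 2 ≤ u n * u (n + 2)) (n : ℕ) : u 1 * u n ≤ u 0 * u (n + 1) := by
  induction n with
  | zero => exact (mul_comm _ _).le
  | succ n ih =>
    rcases (hu_nonneg n).eq_or_lt with h_zero | h_pos
    · have h_succ : u (n + 1) = 0 :=
        sq_nonpos_iff _ |>.1 <| by simpa only [← h_zero, zero_mul] using hu n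
      simpa [h_succ] using mul_nonneg (hu_nonneg 0) (hu_nonneg (n + 2))
    · refine le_of_mul_le_mul_left ?_ h_pos
      calc u n * (u 1 * u (n + 1)) = u 1 * u n * u (n + 1) := by ring
        _ ≤ u 0 * u (n + 1) * u (n + 1) := mul_le_mul_of_nonneg_right ih (hu_nonneg _)
        _ = u 0 * u (n + 1) ^ 2 := by ring
        _ ≤ u 0 * (u n * u (n + 2)) := mul_le_mul_of_nonneg_left (hu n) (hu_nonneg 0)
        _ = u n * (u 0 * u (n + 2)) := by ring

theorem pow_mul_le_pow_mul_of_sq_le_mul (hu_nonneg : ∀ n, 0 ≤ u n)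
    (hu : ∀ n, u (n + 1) ^ 2 ≤ u n * u (n + 2)) (n : ℕ) : u 1 ^ n * u 0 ≤ u 0 ^ n * u n := by
  induction n with
  | zero => simp
  | succ n ih =>
    calc u 1 ^ (n + 1) * u 0 = u 1 * (u 1 ^ n * u 0) := by ring
      _ ≤ u 1 * (u 0 ^ n * u n) := mul_le_mul_of_nonneg_left ih (hu_nonneg 1)
      _ = u 0 ^ n * (u 1 * u n) := by ring
      _ ≤ u 0 ^ n * (u 0 * u (n + 1)) :=
        mul_le_mul_of_nonneg_left (mul_le_mul_succ_of_sq_le_mul hu_nonneg hu n)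
          (pow_nonneg (hu_nonneg 0) n)
      _ = u 0 ^ (n + 1) * u (n + 1) := by ring

end LogConvexSequence

theorem spectralRadius_eq_nnnorm_of_frequently_norm_pow_eq {𝓐 : Type*} [NormedRing 𝓐]
    [NormedAlgebra ℂ 𝓐] [CompleteSpace 𝓐] {a : 𝓐} (ha : ∃ᶠ n in atTop, ‖a ^ n‖ = ‖a‖ ^ n) :
    spectralRadius ℂ a = ‖a‖₊ := by
  refine tendsto_nhds_unique_of_frequently_eq
    (spectrum.pow_nnnorm_pow_one_div_tendsto_nhds_spectralRadius a) tendsto_const_nhds ?_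
  refine (ha.and_eventually (eventually_ne_atTop 0)).mono fun n ⟨hn, hn_ne⟩ ↦ ?_
  have h_nnnorm_pow : ‖a ^ n‖₊ = ‖a‖₊ ^ n := NNReal.eq hn
  rw [h_nnnorm_pow, ENNReal.coe_pow, one_div, ENNReal.pow_rpow_inv_natCast hn_ne]

section InnerProduct

variable {𝕜 E F G : Type*} [RCLike 𝕜] [NormedAddCommGroup E] [InnerProductSpace 𝕜 E]

theorem re_inner_apply_self_le_of_le {S T : E →L[𝕜] E} (h : S ≤ T) (x : E) :
    RCLike.re (inner 𝕜 (S x) x) ≤ RCLike.re (inner 𝕜 (T x) x) := by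
  have h_pos := (le_def S T).1 h |>.re_inner_nonneg_left x
  rwa [sub_apply, inner_sub_left, map_sub, sub_nonneg] at h_pos

theorem norm_apply_eq_of_adjoint_comp_self_eq [NormedAddCommGroup F] [InnerProductSpace 𝕜 F]
    [NormedAddCommGroup G] [InnerProductSpace 𝕜 G] [CompleteSpace E] [CompleteSpace F]
    [CompleteSpace G] {S : E →L[𝕜] F} {T : E →L[𝕜] G}
    (h : adjoint S ∘L S = adjoint T ∘L T) (x : E) : ‖S x‖ = ‖T x‖ := by
  rw [apply_norm_eq_sqrt_inner_adjoint_left, apply_norm_eq_sqrt_inner_adjoint_left, h]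

end InnerProduct

section Paranormal

variable {H : Type*} [NormedAddCommGroup H] [InnerProductSpace ℂ H] {A : H →L[ℂ] H}

theorem Paranormal.norm_apply_pow_mul_norm_le (hA : Paranormal A) (n : ℕ) (x : H) :
    ‖A x‖ ^ n * ‖x‖ ≤ ‖x‖ ^ n * ‖(A ^ n) x‖ := by
  have h_log_convex (n : ℕ) : ‖(A ^ (n + 1)) x‖ ^ 2 ≤ ‖(A ^ n) x‖ * ‖(A ^ (n + 2)) x‖ := by
    rw [mul_comm, pow_succ' A (n + 1), pow_succ' A n]
    exact hA ((A ^ n) x)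
  simpa using pow_mul_le_pow_mul_of_sq_le_mul (fun n ↦ norm_nonneg ((A ^ n) x)) h_log_convex n

theorem Paranormal.norm_pow (hA : Paranormal A) {n : ℕ} (hn : n ≠ 0) : ‖A ^ n‖ = ‖A‖ ^ n := by
  refine le_antisymm (norm_pow_le' A hn.bot_lt) ?_
  suffices ‖A‖ ≤ ‖A ^ n‖ ^ (n⁻¹ : ℝ) by
    simpa only [Real.rpow_inv_natCast_pow (norm_nonneg _) hn] using
      pow_le_pow_left₀ (norm_nonneg A) this n
  refine opNorm_le_of_unit_norm (by positivity) fun x hx ↦ ?_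
  have h_orbit : ‖A x‖ ^ n ≤ ‖A ^ n‖ :=
    calc ‖A x‖ ^ n ≤ ‖(A ^ n) x‖ := by simpa [hx] using hA.norm_apply_pow_mul_norm_le n x
      _ ≤ ‖A ^ n‖ := unit_le_opNorm _ x hx.le
  calc ‖A x‖ = (‖A x‖ ^ n) ^ (n⁻¹ : ℝ) := (Real.pow_rpow_inv_natCast (norm_nonneg _) hn).symm
    _ ≤ ‖A ^ n‖ ^ (n⁻¹ : ℝ) := by gcongr

theorem Paranormal.normaloid [CompleteSpace H] (hA : Paranormal A) : Normaloid A :=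
  spectralRadius_eq_nnnorm_of_frequently_norm_pow_eq <|
    ((eventually_ne_atTop 0).mono fun _ hn ↦ hA.norm_pow hn).frequently

end Paranormal

section ClassA

variable {H : Type*} [NormedAddCommGroup H] [InnerProductSpace ℂ H] [CompleteSpace H]

theorem opAbs_eq_cfcAbs (A : H →L[ℂ] H) : opAbs A = CFC.abs A := by
  rw [CFC.abs, CFC.sqrt_eq_real_sqrt _ (star_mul_self_nonneg A), cfcₙ_eq_cfc]
  rfl

theorem opAbs_sq (A : H →L[ℂ] H) : opAbs A ^ 2 = adjoint A * A := by
  rw [opAbs_eq_cfcAbs, CFC.abs_sq, star_eq_adjoint]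

theorem norm_opAbs_apply (A : H →L[ℂ] H) (x : H) : ‖opAbs A x‖ = ‖A x‖ := by
  have h_self_adjoint : IsSelfAdjoint (opAbs A) := cfc_predicate _ _
  refine norm_apply_eq_of_adjoint_comp_self_eq ?_ x
  rw [h_self_adjoint.adjoint_eq, ← mul_def, ← sq, opAbs_sq, mul_def]

theorem ClassA.paranormal {A : H →L[ℂ] H} (hA : ClassA A) : Paranormal A := fun x ↦
  calc ‖A x‖ ^ 2 = RCLike.re (inner ℂ ((opAbs A ^ 2) x) x) := by
        rw [opAbs_sq]
        exact apply_norm_sq_eq_inner_adjoint_left A x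
    _ ≤ RCLike.re (inner ℂ (opAbs (A ^ 2) x) x) := re_inner_apply_self_le_of_le hA x
    _ ≤ ‖opAbs (A ^ 2) x‖ * ‖x‖ := re_inner_le_norm _ _
    _ = ‖A (A x)‖ * ‖x‖ := by rw [norm_opAbs_apply, sq, mul_apply_eq_comp]

end ClassA

theorem classA_normaloid {H : Type*} [NormedAddCommGroup H]
    [InnerProductSpace ℂ H] [CompleteSpace H]
    (A : H →L[ℂ] H) (hA : ClassA A) : Normaloid A :=
  hA.paranormal.normaloid
end

section
/- Let A ∈ B(H) be an invertible p-hyponormal operator on a complex Hilbert space H for some 0 < p ≤ 1. Then A is log-hyponormal. -/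
open ContinuousLinearMap Filter

set_option synthInstance.maxHeartbeats 400000

/-! Both `A*A` and `AA*` are positive and invertible. Apply the operator monotone function `log` to
`(AA*)^p ≤ (A*A)^p`; since `log (T^p) = p log T` for positive invertible `T`, dividing by `p > 0`
gives `log (AA*) ≤ log (A*A)`. -/

section RealPower

variable {R : Type*} [NormedRing R] [StarRing R] [NormedAlgebra ℝ R]
  [ContinuousFunctionalCalculus ℝ R IsSelfAdjoint] [PartialOrder R] [StarOrderedRing R]
  [NonnegSpectrumClass ℝ R]

theorem cfcLog_rpow {a : R} (ha : IsStrictlyPositive a) (p : ℝ) :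
    CFC.log (a ^ p) = p • CFC.log a := by
  have hpow : ContinuousOn (fun x : ℝ => x ^ p) (spectrum ℝ a) :=
    continuousOn_id.rpow_const fun x hx => .inl (ha.spectrum_pos hx).ne'
  have hlog : ContinuousOn Real.log (spectrum ℝ a) :=
    continuousOn_id.log fun x hx => (ha.spectrum_pos hx).ne'
  have hlogPow : ContinuousOn Real.log ((fun x : ℝ => x ^ p) '' spectrum ℝ a) :=
    continuousOn_id.log <| Set.forall_mem_image.2 fun x hx =>
      (Real.rpow_pos_of_pos (ha.spectrum_pos hx) p).ne'
  calc CFC.log (a ^ p) = cfc Real.log (cfc (fun x : ℝ => x ^ p) a) := by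
        rw [CFC.rpow_eq_cfc_real ha.nonneg, CFC.log]
    _ = cfc (fun x : ℝ => Real.log (x ^ p)) a := (cfc_comp' Real.log _ a hlogPow hpow).symm
    _ = cfc (fun x : ℝ => p • Real.log x) a :=
        cfc_congr fun x hx => Real.log_rpow (ha.spectrum_pos hx) p
    _ = p • CFC.log a := cfc_smul p Real.log a hlog

end RealPower

section CStarAlgebra

variable {R : Type*} [CStarAlgebra R] [PartialOrder R] [StarOrderedRing R]

theorem cfcLog_le_cfcLog_of_rpow_le_rpow {a b : R} {p : ℝ} (hp : 0 < p)
    (ha : IsStrictlyPositive a) (hb : 0 ≤ b) (hab : a ^ p ≤ b ^ p) :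
    CFC.log a ≤ CFC.log b := by
  have hb' : IsStrictlyPositive b :=
    ((CFC.isUnit_rpow_iff b p hp.ne').1 ((ha.rpow a p).of_le hab).isUnit).isStrictlyPositive hb
  have hlog : p • CFC.log a ≤ p • CFC.log b := by
    simpa only [cfcLog_rpow ha, cfcLog_rpow hb'] using CFC.log_le_log hab (ha.rpow a p)
  exact (smul_le_smul_iff_of_pos_left hp).1 hlog

theorem invertible_pHyponormal_logHyponormal_general {a : R} {p : ℝ} (hp : 0 < p) (ha : IsUnit a)
    (hap : (a * star a) ^ p ≤ (star a * a) ^ p) :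
    CFC.log (a * star a) ≤ CFC.log (star a * a) :=
  cfcLog_le_cfcLog_of_rpow_le_rpow hp
    ((ha.mul ha.star).isStrictlyPositive (mul_star_self_nonneg a)) (star_mul_self_nonneg a) hap

end CStarAlgebra

section Operator

variable {H : Type*} [NormedAddCommGroup H] [InnerProductSpace ℂ H] [CompleteSpace H]

theorem opRpow_eq_rpow {A : H →L[ℂ] H} (hA : 0 ≤ A) (p : ℝ) : opRpow A p = A ^ p :=
  (CFC.rpow_eq_cfc_real hA).symm

theorem pHyponormal_iff_rpow_le_rpow {A : H →L[ℂ] H} {p : ℝ} :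
    PHyponormal A p ↔ (A * star A) ^ p ≤ (star A * A) ^ p := by
  rw [← opRpow_eq_rpow (mul_star_self_nonneg A), ← opRpow_eq_rpow (star_mul_self_nonneg A)]
  rfl

end Operator

theorem invertible_pHyponormal_logHyponormal {H : Type*} [NormedAddCommGroup H]
    [InnerProductSpace ℂ H] [CompleteSpace H]
    (A : H →L[ℂ] H) (p : ℝ) (hp0 : 0 < p) (hp1 : p ≤ 1)
    (hA : IsUnit A) (hAp : PHyponormal A p) : LogHyponormal A :=
  ⟨hA, invertible_pHyponormal_logHyponormal_general hp0 hA (pHyponormal_iff_rpow_le_rpow.1 hAp)⟩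
end
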